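/- Let N ≥ 1, p, q ≥ 0 with pq > 1, and let r₁ = (N/2)(pq−1)/(p+1) and r₂ = (N/2)(pq−1)/(q+1), and assume r₁ > 1 and r₂ > 1 (equivalently N(p/r₂ − 1/r₁) = N(q/r₁ − 1/r₂) = 2). Then there exist constants d* > 0 and C > 0 such that for every d with 0 < d ≤ d* and all nonnegative measurable functions u₀, v₀ on ℝ^N satisfying 0 ≤ u₀(x) ≤ d|x|^{−N/r₁} and 0 ≤ v₀(x) ≤ d|x|^{−N/r₂} for all x ∈ ℝ^N, the system (S) possesses a global-in-time solution (u,v) on ℝ^N × (0,∞) satisfying 0 ≤ u(x,t) ≤ C(|x| + t^{1/2})^{−N/r₁} and 0 ≤ v(x,t) ≤ C(|x| + t^{1/2})^{−N/r₂} for a.e. x ∈ ℝ^N and all t > 0. -/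

import Mathlib

open MeasureTheory ENNReal Filter

noncomputable section

/-- Euclidean space `ℝ^N`. -/
abbrev Euc (N : ℕ) := EuclideanSpace ℝ (Fin N)

/-- The heat semigroup applied to a (nonnegative) function `φ` on `ℝ^N`, with values in `[0,∞]`:
`[S(t)φ](x) = ∫ (4πt)^{-N/2} exp(-|x-y|²/(4t)) φ(y) dy`. -/
noncomputable def heatS (N : ℕ) (t : ℝ) (φ : Euc N → ℝ) (x : Euc N) : ℝ≥0∞ :=
  ∫⁻ y, ENNReal.ofReal
    ((4 * Real.pi * t) ^ (-(N : ℝ) / 2) * Real.exp (-‖x - y‖ ^ 2 / (4 * t)) * φ y)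

/-- The `L^∞` norm of `S(t)φ` on `ℝ^N`. -/
noncomputable def heatSup (N : ℕ) (t : ℝ) (φ : Euc N → ℝ) : ℝ≥0∞ :=
  essSup (heatS N t φ) volume

/-- The `L^{r,∞}(E)` quasinorm: for `1 < r < ∞` it is
`sup_{λ>0} λ |{x ∈ E : |f x| > λ}|^{1/r}`; for `r = 1` (resp. `r = ∞`)
it is the usual `L¹(E)` (resp. `L^∞(E)`) norm. -/
noncomputable def wnorm (N : ℕ) (r : ℝ≥0∞) (f : Euc N → ℝ) (E : Set (Euc N)) : ℝ≥0∞ :=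
  if r = 1 then ∫⁻ x in E, ENNReal.ofReal |f x|
  else if r = ⊤ then essSup (fun x => ENNReal.ofReal |f x|) (volume.restrict E)
  else ⨆ (l : ℝ) (_ : 0 < l), ENNReal.ofReal l * (volume {x ∈ E | l < |f x|}) ^ (1 / r.toReal)

/-- The uniformly local quasinorm `|||f|||_{r,ρ} = sup_x ‖f‖_{L^{r,∞}(B(x,ρ))}`
(for `r = ∞` it is the `L^∞(ℝ^N)` norm). -/
noncomputable def ulocNorm (N : ℕ) (r : ℝ≥0∞) (ρ : ℝ) (f : Euc N → ℝ) : ℝ≥0∞ :=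
  if r = ⊤ then essSup (fun x => ENNReal.ofReal |f x|) volume
  else ⨆ x : Euc N, wnorm N r f (Metric.ball x ρ)

/-- `u ∈ L^∞(τ, T-τ; L^∞(ℝ^N))` for every `τ ∈ (0, T/2)`. -/
def LocBdd (N : ℕ) (T : ℝ≥0∞) (u : Euc N → ℝ → ℝ) : Prop :=
  ∀ τ : ℝ, 0 < τ → ENNReal.ofReal (2 * τ) < T →
    ∃ M : ℝ, ∀ t : ℝ, τ ≤ t → ENNReal.ofReal (t + τ) ≤ T →
      ∀ᵐ x ∂(volume : Measure (Euc N)), |u x t| ≤ M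

/-- Regularity requirements on a pair `(u,v)`: nonnegativity, joint measurability and
uniform boundedness away from `t = 0` and `t = T`. -/
def PairRegular (N : ℕ) (T : ℝ≥0∞) (u v : Euc N → ℝ → ℝ) : Prop :=
  (∀ x t, 0 ≤ u x t) ∧ (∀ x t, 0 ≤ v x t) ∧
  Measurable (Function.uncurry u) ∧ Measurable (Function.uncurry v) ∧
  LocBdd N T u ∧ LocBdd N T v

/-- The Duhamel identities for the system (S) `∂ₜu = Δu + v^p`, `∂ₜv = Δv + u^q` at time `t`. -/
def DuhamelSys (N : ℕ) (p q : ℝ) (u₀ v₀ : Euc N → ℝ) (u v : Euc N → ℝ → ℝ) (t : ℝ) : Prop :=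
  (∀ᵐ x ∂(volume : Measure (Euc N)), ENNReal.ofReal (u x t) =
      heatS N t u₀ x + ∫⁻ s in Set.Ioo 0 t, heatS N (t - s) (fun y => v y s ^ p) x) ∧
  (∀ᵐ x ∂(volume : Measure (Euc N)), ENNReal.ofReal (v x t) =
      heatS N t v₀ x + ∫⁻ s in Set.Ioo 0 t, heatS N (t - s) (fun y => u y s ^ q) x)

/-- The Duhamel inequalities (`≥`, with finite left-hand side) for the system (S) at time `t`. -/
def DuhamelSuperSys (N : ℕ) (p q : ℝ) (u₀ v₀ : Euc N → ℝ) (u v : Euc N → ℝ → ℝ) (t : ℝ) : Prop :=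
  (∀ᵐ x ∂(volume : Measure (Euc N)),
      heatS N t u₀ x + (∫⁻ s in Set.Ioo 0 t, heatS N (t - s) (fun y => v y s ^ p) x) ≤
        ENNReal.ofReal (u x t)) ∧
  (∀ᵐ x ∂(volume : Measure (Euc N)),
      heatS N t v₀ x + (∫⁻ s in Set.Ioo 0 t, heatS N (t - s) (fun y => u y s ^ q) x) ≤
        ENNReal.ofReal (v x t))

/-- `(u,v)` is a solution of the system (S) on `ℝ^N × (0,T)`. -/
def IsSolSys (N : ℕ) (p q : ℝ) (u₀ v₀ : Euc N → ℝ) (T : ℝ≥0∞) (u v : Euc N → ℝ → ℝ) : Prop :=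
  PairRegular N T u v ∧
  ∀ t : ℝ, 0 < t → ENNReal.ofReal t < T → DuhamelSys N p q u₀ v₀ u v t

/-- `(u,v)` is a supersolution of the system (S) on `ℝ^N × (0,T)`. -/
def IsSuperSys (N : ℕ) (p q : ℝ) (u₀ v₀ : Euc N → ℝ) (T : ℝ≥0∞) (u v : Euc N → ℝ → ℝ) : Prop :=
  PairRegular N T u v ∧
  ∀ t : ℝ, 0 < t → ENNReal.ofReal t < T → DuhamelSuperSys N p q u₀ v₀ u v t

/-- `(u,v)` is the minimal solution of the system (S) on `ℝ^N × (0,T)`. -/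
def IsMinSolSys (N : ℕ) (p q : ℝ) (u₀ v₀ : Euc N → ℝ) (T : ℝ≥0∞)
    (u v : Euc N → ℝ → ℝ) : Prop :=
  IsSolSys N p q u₀ v₀ T u v ∧
  ∀ u' v' : Euc N → ℝ → ℝ, IsSolSys N p q u₀ v₀ T u' v' →
    ∀ t : ℝ, 0 < t → ENNReal.ofReal t < T →
      (∀ᵐ x ∂(volume : Measure (Euc N)), u x t ≤ u' x t) ∧
      (∀ᵐ x ∂(volume : Measure (Euc N)), v x t ≤ v' x t)

/-- Regularity requirements on a scalar function `w`. -/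
def ScalarRegular (N : ℕ) (T : ℝ≥0∞) (w : Euc N → ℝ → ℝ) : Prop :=
  (∀ x t, 0 ≤ w x t) ∧ Measurable (Function.uncurry w) ∧ LocBdd N T w

/-- The Duhamel identity for the scalar problem (E) `∂ₜw = Δw + α w^A + β w^B` at time `t`. -/
def DuhamelScalar (N : ℕ) (α β A B : ℝ) (w₀ : Euc N → ℝ) (w : Euc N → ℝ → ℝ) (t : ℝ) : Prop :=
  ∀ᵐ x ∂(volume : Measure (Euc N)), ENNReal.ofReal (w x t) =
    heatS N t w₀ x +
      ∫⁻ s in Set.Ioo 0 t, heatS N (t - s) (fun y => α * w y s ^ A + β * w y s ^ B) x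

/-- The Duhamel inequality (`≥`, with finite left-hand side) for the scalar problem (E). -/
def DuhamelSuperScalar (N : ℕ) (α β A B : ℝ) (w₀ : Euc N → ℝ) (w : Euc N → ℝ → ℝ)
    (t : ℝ) : Prop :=
  ∀ᵐ x ∂(volume : Measure (Euc N)),
    heatS N t w₀ x +
        (∫⁻ s in Set.Ioo 0 t, heatS N (t - s) (fun y => α * w y s ^ A + β * w y s ^ B) x) ≤
      ENNReal.ofReal (w x t)

/-- `w` is a solution of the scalar problem (E) on `ℝ^N × (0,T)`. -/
def IsSolScalar (N : ℕ) (α β A B : ℝ) (w₀ : Euc N → ℝ) (T : ℝ≥0∞)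
    (w : Euc N → ℝ → ℝ) : Prop :=
  ScalarRegular N T w ∧
  ∀ t : ℝ, 0 < t → ENNReal.ofReal t < T → DuhamelScalar N α β A B w₀ w t

/-- `w` is a supersolution of the scalar problem (E) on `ℝ^N × (0,T)`. -/
def IsSuperScalar (N : ℕ) (α β A B : ℝ) (w₀ : Euc N → ℝ) (T : ℝ≥0∞)
    (w : Euc N → ℝ → ℝ) : Prop :=
  ScalarRegular N T w ∧
  ∀ t : ℝ, 0 < t → ENNReal.ofReal t < T → DuhamelSuperScalar N α β A B w₀ w t

/-- The Duhamel identities for the strongly coupled system (SC)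
`∂ₜu = Δu + u^{p₁} v^{p₂}`, `∂ₜv = Δv + u^{q₁} v^{q₂}` at time `t`. -/
def DuhamelSC (N : ℕ) (p₁ p₂ q₁ q₂ : ℝ) (u₀ v₀ : Euc N → ℝ) (u v : Euc N → ℝ → ℝ)
    (t : ℝ) : Prop :=
  (∀ᵐ x ∂(volume : Measure (Euc N)), ENNReal.ofReal (u x t) =
      heatS N t u₀ x +
        ∫⁻ s in Set.Ioo 0 t, heatS N (t - s) (fun y => u y s ^ p₁ * v y s ^ p₂) x) ∧
  (∀ᵐ x ∂(volume : Measure (Euc N)), ENNReal.ofReal (v x t) =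
      heatS N t v₀ x +
        ∫⁻ s in Set.Ioo 0 t, heatS N (t - s) (fun y => u y s ^ q₁ * v y s ^ q₂) x)

/-- `(u,v)` is a solution of the strongly coupled system (SC) on `ℝ^N × (0,T)`. -/
def IsSolSC (N : ℕ) (p₁ p₂ q₁ q₂ : ℝ) (u₀ v₀ : Euc N → ℝ) (T : ℝ≥0∞)
    (u v : Euc N → ℝ → ℝ) : Prop :=
  PairRegular N T u v ∧
  ∀ t : ℝ, 0 < t → ENNReal.ofReal t < T → DuhamelSC N p₁ p₂ q₁ q₂ u₀ v₀ u v t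


/-- ENNReal valued heat kernel. -/
def hk (N : ℕ) (t : ℝ) (z : Euc N) : ℝ≥0∞ :=
  ENNReal.ofReal ((4 * Real.pi * t) ^ (-(N : ℝ) / 2) * Real.exp (-‖z‖ ^ 2 / (4 * t)))

lemma hk_lintegral (N : ℕ) {t : ℝ} (ht : 0 < t) (x : Euc N) :
    ∫⁻ y, hk N t (x - y) = 1 := by
  rw [lintegral_sub_left_eq_self (fun z => hk N t z) x]
  unfold hk
  have hb : 0 < 1 / (4 * t) := by positivity
  have h1 := GaussianFourier.integral_rexp_neg_mul_sq_norm (V := Euc N) hb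
  have hpos : (0 : ℝ) < (Real.pi / (1 / (4 * t))) ^ (Module.finrank ℝ (Euc N) / 2 : ℝ) := by
    positivity
  have hi : Integrable (fun v : Euc N => Real.exp (-(1 / (4 * t)) * ‖v‖ ^ 2)) := by
    by_contra h
    rw [integral_undef h] at h1
    exact hpos.ne h1
  have he : ∀ z : Euc N, (4 * Real.pi * t) ^ (-(N : ℝ) / 2) * Real.exp (-‖z‖ ^ 2 / (4 * t))
      = (4 * Real.pi * t) ^ (-(N : ℝ) / 2) * Real.exp (-(1 / (4 * t)) * ‖z‖ ^ 2) := by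
    intro z; congr 2; ring
  simp_rw [he]
  rw [← ofReal_integral_eq_lintegral_ofReal (hi.const_mul _)
    (Filter.Eventually.of_forall fun z => by positivity), integral_const_mul, h1,
    finrank_euclideanSpace_fin]
  rw [show Real.pi / (1 / (4 * t)) = 4 * Real.pi * t by field_simp, neg_div,
    Real.rpow_neg (by positivity), inv_mul_cancel₀ (by positivity), ENNReal.ofReal_one]

lemma ball_bound (N : ℕ) (hN : 1 ≤ N) (α : ℝ) (hα : α < N) :
    ∃ c : ℝ, 0 ≤ c ∧ ∀ R : ℝ, 0 < R →
      ∫⁻ y in Metric.ball (0 : Euc N) R, ENNReal.ofReal ‖y‖ ^ (-α)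
        ≤ ENNReal.ofReal (c * R ^ ((N : ℝ) - α)) := by
  have : Nonempty (Fin N) := ⟨⟨0, hN⟩⟩
  have : Nontrivial (Euc N) := inferInstance
  have hNa : 0 < (N : ℝ) - α := by linarith
  refine ⟨N * (volume.real (Metric.ball (0 : Euc N) 1) * (1 / ((N : ℝ) - α))), by positivity, ?_⟩
  intro R hR
  have hcong : ∀ y : ℝ, y ∈ Set.Ioo 0 R →
      y ^ (Module.finrank ℝ (Euc N) - 1) • y ^ (-α) = y ^ ((N : ℝ) - α - 1) := by
    intro y hy
    rw [finrank_euclideanSpace_fin, smul_eq_mul, ← Real.rpow_natCast, ← Real.rpow_add hy.1,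
      Nat.cast_sub hN]
    congr 1; push_cast; ring
  have hIntg : IntegrableOn (fun y : ℝ => y ^ ((N : ℝ) - α - 1)) (Set.Ioo 0 R) := by
    rw [intervalIntegral.integrableOn_Ioo_rpow_iff hR]; linarith
  have hIntg2 : IntegrableOn (fun x : Euc N => ‖x‖ ^ (-α)) (Metric.ball 0 R) := by
    rw [integrableOn_fun_norm_addHaar volume (f := fun y : ℝ => y ^ (-α))]
    exact hIntg.congr_fun (fun y hy => (hcong y hy).symm) measurableSet_Ioo
  have hval : ∫ x in Metric.ball (0 : Euc N) R, ‖x‖ ^ (-α)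
      = N * (volume.real (Metric.ball (0 : Euc N) 1) * (1 / ((N : ℝ) - α))) * R ^ ((N : ℝ) - α) := by
    rw [← integral_indicator measurableSet_ball]
    have h1 : (Metric.ball (0 : Euc N) R).indicator (fun x => ‖x‖ ^ (-α))
        = fun x => (Set.Iio R).indicator (fun y : ℝ => y ^ (-α)) ‖x‖ := by
      ext x; simp [Set.indicator]
    rw [h1, integral_fun_norm_addHaar]
    have h2 : ∫ y in Set.Ioi (0 : ℝ), y ^ (Module.finrank ℝ (Euc N) - 1) •
        (Set.Iio R).indicator (fun y : ℝ => y ^ (-α)) y = ∫ y in (0 : ℝ)..R, y ^ ((N : ℝ) - α - 1) := by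
      rw [intervalIntegral.integral_of_le hR.le, integral_Ioc_eq_integral_Ioo,
        ← setIntegral_congr_fun measurableSet_Ioo hcong]
      rw [← integral_indicator measurableSet_Ioi, ← integral_indicator measurableSet_Ioo]
      congr 1
      ext y
      by_cases h0 : 0 < y <;> by_cases h1 : y < R <;> simp [Set.indicator, h0, h1]
    rw [h2, integral_rpow (Or.inl (by linarith)), finrank_euclideanSpace_fin, sub_add_cancel,
      Real.zero_rpow hNa.ne']
    simp only [nsmul_eq_mul, smul_eq_mul]
    ring
  rw [← hval, ofReal_integral_eq_lintegral_ofReal hIntg2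
    (Filter.Eventually.of_forall fun x => by positivity)]
  apply le_of_eq
  apply lintegral_congr_ae
  have : ∀ᵐ y ∂(volume : Measure (Euc N)), y ≠ 0 := by
    simp [ae_iff]
  filter_upwards [ae_restrict_of_ae this] with y hy
  rw [ENNReal.ofReal_rpow_of_pos (norm_pos_iff.2 hy)]

lemma hk_core (N : ℕ) (hN : 1 ≤ N) (α : ℝ) (hα0 : 0 ≤ α) (c : ℝ) (hc : 0 ≤ c)
    (hball : ∀ R : ℝ, 0 < R →
      ∫⁻ y in Metric.ball (0 : Euc N) R, ENNReal.ofReal ‖y‖ ^ (-α)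
        ≤ ENNReal.ofReal (c * R ^ ((N : ℝ) - α)))
    {t : ℝ} (ht : 0 < t) (x : Euc N) {R g : ℝ} (hR : 0 < R) (hg : 0 ≤ g)
    (hG : ∀ y ∈ Metric.ball (0 : Euc N) R, hk N t (x - y) ≤ ENNReal.ofReal (g * R ^ (-(N : ℝ)))) :
    ∫⁻ y, hk N t (x - y) * ENNReal.ofReal ‖y‖ ^ (-α)
      ≤ ENNReal.ofReal ((g * c + 1) * R ^ (-α)) := by
  rw [← lintegral_add_compl _ (measurableSet_ball (x := (0 : Euc N)) (ε := R))]
  rw [add_mul, ENNReal.ofReal_add (by positivity) (by positivity)]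
  apply add_le_add
  · calc ∫⁻ y in Metric.ball (0 : Euc N) R, hk N t (x - y) * ENNReal.ofReal ‖y‖ ^ (-α)
        ≤ ∫⁻ y in Metric.ball (0 : Euc N) R,
            ENNReal.ofReal (g * R ^ (-(N : ℝ))) * ENNReal.ofReal ‖y‖ ^ (-α) := by
          apply setLIntegral_mono' measurableSet_ball
          intro y hy
          gcongr
          exact hG y hy
      _ = ENNReal.ofReal (g * R ^ (-(N : ℝ))) *
            ∫⁻ y in Metric.ball (0 : Euc N) R, ENNReal.ofReal ‖y‖ ^ (-α) := by
          rw [lintegral_const_mul' _ _ ENNReal.ofReal_ne_top]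
      _ ≤ ENNReal.ofReal (g * R ^ (-(N : ℝ))) * ENNReal.ofReal (c * R ^ ((N : ℝ) - α)) := by
          gcongr; exact hball R hR
      _ = _ := by
          rw [← ENNReal.ofReal_mul (by positivity)]
          congr 1
          rw [show -α = -(N : ℝ) + (N - α) by ring, Real.rpow_add hR]; ring
  · calc ∫⁻ y in (Metric.ball (0 : Euc N) R)ᶜ, hk N t (x - y) * ENNReal.ofReal ‖y‖ ^ (-α)
        ≤ ∫⁻ y in (Metric.ball (0 : Euc N) R)ᶜ, hk N t (x - y) * ENNReal.ofReal (R ^ (-α)) := by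
          apply setLIntegral_mono' measurableSet_ball.compl
          intro y hy
          have hy' : R ≤ ‖y‖ := by simpa using hy
          gcongr
          rw [ENNReal.ofReal_rpow_of_pos (by linarith)]
          apply ENNReal.ofReal_le_ofReal
          exact Real.rpow_le_rpow_of_nonpos hR hy' (by linarith)
      _ ≤ ∫⁻ y, hk N t (x - y) * ENNReal.ofReal (R ^ (-α)) := setLIntegral_le_lintegral _ _
      _ = _ := by
          rw [lintegral_mul_const' _ _ ENNReal.ofReal_ne_top, hk_lintegral N ht, one_mul, one_mul]

lemma rpow_exp_bound (N : ℕ) {z : ℝ} (hz : 0 ≤ z) :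
    z ^ ((N : ℝ) / 2) * Real.exp (-z) ≤ N.factorial * Real.exp 1 := by
  have h1 : z ^ ((N : ℝ) / 2) ≤ (1 + z) ^ N := by
    calc z ^ ((N : ℝ) / 2) ≤ (1 + z) ^ ((N : ℝ) / 2) := by
          apply Real.rpow_le_rpow hz (by linarith) (by positivity)
      _ ≤ (1 + z) ^ (N : ℝ) := by
          apply Real.rpow_le_rpow_of_exponent_le (by linarith)
          have : (0 : ℝ) ≤ N := by positivity
          linarith
      _ = _ := Real.rpow_natCast _ _
  have h2 := Real.pow_div_factorial_le_exp (1 + z) (by linarith) N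
  rw [div_le_iff₀ (by positivity)] at h2
  calc z ^ ((N : ℝ) / 2) * Real.exp (-z) ≤ (Real.exp (1 + z) * N.factorial) * Real.exp (-z) := by
        gcongr; linarith
    _ = N.factorial * (Real.exp (1 + z) * Real.exp (-z)) := by ring
    _ = _ := by rw [← Real.exp_add]; ring_nf

lemma hk_le_far (N : ℕ) {t R : ℝ} (ht : 0 < t) (hR : 0 < R) (z : Euc N) (hz : R ≤ ‖z‖) :
    hk N t z ≤ ENNReal.ofReal ((N.factorial * Real.exp 1) * R ^ (-(N : ℝ))) := by
  unfold hk
  apply ENNReal.ofReal_le_ofReal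
  set w := R ^ 2 / (4 * t) with hw
  have hw0 : 0 < w := by positivity
  have h1 : Real.exp (-‖z‖ ^ 2 / (4 * t)) ≤ Real.exp (-w) := by
    apply Real.exp_le_exp.2
    rw [hw, neg_div]
    apply neg_le_neg
    gcongr
  have h2 : (4 * Real.pi * t) ^ (-(N : ℝ) / 2) ≤ R ^ (-(N : ℝ)) * w ^ ((N : ℝ) / 2) := by
    calc (4 * Real.pi * t) ^ (-(N : ℝ) / 2) ≤ (4 * t) ^ (-(N : ℝ) / 2) := by
          apply Real.rpow_le_rpow_of_nonpos (by positivity)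
          · nlinarith [Real.pi_gt_three]
          · have : (0 : ℝ) ≤ N := by positivity
            linarith
      _ = _ := by
          rw [hw, Real.div_rpow (by positivity) (by positivity), ← Real.rpow_natCast R 2,
            ← Real.rpow_mul hR.le, neg_div, Real.rpow_neg (by positivity), Real.rpow_neg hR.le]
          have : ((2 : ℕ) : ℝ) * ((N : ℝ) / 2) = N := by push_cast; ring
          rw [this]
          have : R ^ (N : ℝ) ≠ 0 := by positivity
          field_simp
  calc _ ≤ (R ^ (-(N : ℝ)) * w ^ ((N : ℝ) / 2)) * Real.exp (-w) := by gcongr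
    _ = R ^ (-(N : ℝ)) * (w ^ ((N : ℝ) / 2) * Real.exp (-w)) := by ring
    _ ≤ R ^ (-(N : ℝ)) * (N.factorial * Real.exp 1) := by
        exact mul_le_mul_of_nonneg_left (rpow_exp_bound N hw0.le) (by positivity)
    _ = _ := by ring

lemma hk_le_near (N : ℕ) {t : ℝ} (ht : 0 < t) (z : Euc N) :
    hk N t z ≤ ENNReal.ofReal (1 * Real.sqrt t ^ (-(N : ℝ))) := by
  unfold hk
  apply ENNReal.ofReal_le_ofReal
  have h1 : Real.exp (-‖z‖ ^ 2 / (4 * t)) ≤ 1 := by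
    apply Real.exp_le_one_iff.2
    rw [neg_div]
    have : 0 ≤ ‖z‖ ^ 2 / (4 * t) := by positivity
    linarith
  have h2 : (4 * Real.pi * t) ^ (-(N : ℝ) / 2) ≤ t ^ (-(N : ℝ) / 2) := by
    apply Real.rpow_le_rpow_of_nonpos (by positivity)
    · nlinarith [Real.pi_gt_three]
    · have : (0 : ℝ) ≤ N := by positivity
      linarith
  have h3 : Real.sqrt t ^ (-(N : ℝ)) = t ^ (-(N : ℝ) / 2) := by
    rw [Real.sqrt_eq_rpow, ← Real.rpow_mul ht.le]; congr 1; ring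
  rw [h3, one_mul]
  calc _ ≤ t ^ (-(N : ℝ) / 2) * 1 := by gcongr
    _ = _ := mul_one _

/-- The parabolic size `max(|x|, √t)`. -/
def pm (N : ℕ) (x : Euc N) (t : ℝ) : ℝ := max ‖x‖ (Real.sqrt t)

lemma pm_pos (N : ℕ) (x : Euc N) {t : ℝ} (ht : 0 < t) : 0 < pm N x t :=
  lt_max_of_lt_right (Real.sqrt_pos.2 ht)

lemma lemA (N : ℕ) (hN : 1 ≤ N) (α : ℝ) (hα0 : 0 ≤ α) (hα : α < N) :
    ∃ A : ℝ, 0 < A ∧ ∀ t : ℝ, 0 < t → ∀ x : Euc N,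
      ∫⁻ y, hk N t (x - y) * ENNReal.ofReal ‖y‖ ^ (-α)
        ≤ ENNReal.ofReal (A * pm N x t ^ (-α)) := by
  obtain ⟨c, hc, hball⟩ := ball_bound N hN α hα
  set k : ℝ := N.factorial * Real.exp 1 with hk'
  have hk0 : 0 ≤ k := by positivity
  refine ⟨(1 * c + 1) + (k * c + 1) * 2 ^ α, by positivity, ?_⟩
  intro t ht x
  have hpm := pm_pos N x ht
  rcases le_total ‖x‖ (Real.sqrt t) with h | h
  · refine (hk_core N hN α hα0 c hc hball ht x (Real.sqrt_pos.2 ht) zero_le_one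
      (fun y _ => hk_le_near N ht _)).trans ?_
    apply ENNReal.ofReal_le_ofReal
    rw [show pm N x t = Real.sqrt t from max_eq_right h]
    have : 0 ≤ (k * c + 1) * 2 ^ α := by positivity
    exact mul_le_mul_of_nonneg_right (by linarith) (by positivity)
  · have hx : 0 < ‖x‖ := (Real.sqrt_pos.2 ht).trans_le h
    refine (hk_core N hN α hα0 c hc hball ht x (R := ‖x‖ / 2) (by positivity) hk0
      (fun y hy => hk_le_far N ht (by positivity) _ ?_)).trans ?_
    · have hy' : ‖y‖ < ‖x‖ / 2 := by simpa using hy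
      have := norm_sub_norm_le x y
      linarith
    apply ENNReal.ofReal_le_ofReal
    rw [show pm N x t = ‖x‖ from max_eq_left h]
    have h1 : (‖x‖ / 2) ^ (-α) = 2 ^ α * ‖x‖ ^ (-α) := by
      rw [Real.div_rpow hx.le (by norm_num), Real.rpow_neg (by norm_num : (0:ℝ) ≤ 2)]
      field_simp
    rw [h1, ← mul_assoc]
    exact mul_le_mul_of_nonneg_right (by linarith) (by positivity)

lemma rpow_half_neg {z α : ℝ} (hz : 0 < z) : (z / 2) ^ (-α) = 2 ^ α * z ^ (-α) := by
  rw [Real.div_rpow hz.le (by norm_num), Real.rpow_neg (by norm_num : (0:ℝ) ≤ 2)]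
  field_simp

lemma sqrt_rpow_two_mul {t : ℝ} (ht : 0 < t) (e : ℝ) : Real.sqrt t ^ (2 * e) = t ^ e := by
  rw [Real.sqrt_eq_rpow, ← Real.rpow_mul ht.le]; congr 1; ring

lemma half_sqrt_le {s t : ℝ} (ht : 0 < t) (h : t / 2 ≤ s) : Real.sqrt t / 2 ≤ Real.sqrt s := by
  apply Real.le_sqrt_of_sq_le
  rw [div_pow, Real.sq_sqrt ht.le]
  linarith

lemma lemB (N : ℕ) (hN : 1 ≤ N) (a : ℝ) (ha0 : 0 < a) (ha : a < N) :
    ∃ B ε : ℝ, 0 < B ∧ 0 < ε ∧ ∀ s t : ℝ, 0 < s → s < t → ∀ x : Euc N,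
      ∫⁻ y, hk N (t - s) (x - y) * ENNReal.ofReal (pm N y s ^ (-(a + 2)))
        ≤ ENNReal.ofReal (B * pm N x t ^ (-a) * t ^ (-ε) * s ^ (ε - 1)) := by
  obtain ⟨ε, hε0, hε1, hεN⟩ : ∃ ε : ℝ, 0 < ε ∧ ε ≤ 1 ∧ a + 2 * ε < N := by
    refine ⟨min 1 (((N : ℝ) - a) / 4), ?_, min_le_left _ _, ?_⟩
    · apply lt_min one_pos; linarith
    · have := min_le_right 1 (((N : ℝ) - a) / 4)
      linarith
  obtain ⟨A, hA, hAb⟩ := lemA N hN (a + 2 * ε) (by linarith) hεN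
  refine ⟨A * 2 ^ (a + 2 * ε) + 2 ^ (a + 2), ε, by positivity, hε0, ?_⟩
  intro s t hs hst x
  have ht : 0 < t := hs.trans hst
  have hts : 0 < t - s := by linarith
  have hpm := pm_pos N x ht
  have hpms := pm_pos N x hts
  by_cases hcase : pm N x t / 2 ≤ pm N x (t - s)
  · have hpt : ∀ y : Euc N, ENNReal.ofReal (pm N y s ^ (-(a + 2)))
        ≤ ENNReal.ofReal (s ^ (ε - 1)) * ENNReal.ofReal ‖y‖ ^ (-(a + 2 * ε)) := by
      intro y
      have hpy := pm_pos N y hs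
      have hspos : 0 < s ^ (ε - 1) := by positivity
      rcases eq_or_ne y 0 with rfl | hy
      · rw [norm_zero, ENNReal.ofReal_zero, ENNReal.zero_rpow_of_neg (by linarith),
          ENNReal.mul_top (by simpa using hspos)]
        exact le_top
      · have hy' : 0 < ‖y‖ := norm_pos_iff.2 hy
        rw [ENNReal.ofReal_rpow_of_pos hy', ← ENNReal.ofReal_mul hspos.le]
        apply ENNReal.ofReal_le_ofReal
        rw [show -(a + 2) = 2 * (ε - 1) + -(a + 2 * ε) by ring, Real.rpow_add hpy,
          ← sqrt_rpow_two_mul hs]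
        have hsq := Real.sqrt_pos.2 hs
        apply mul_le_mul _ _ (by positivity) (by positivity)
        · exact Real.rpow_le_rpow_of_nonpos hsq (le_max_right _ _) (by linarith)
        · exact Real.rpow_le_rpow_of_nonpos hy' (le_max_left _ _) (by linarith)
    calc ∫⁻ y, hk N (t - s) (x - y) * ENNReal.ofReal (pm N y s ^ (-(a + 2)))
        ≤ ∫⁻ y, ENNReal.ofReal (s ^ (ε - 1)) *
            (hk N (t - s) (x - y) * ENNReal.ofReal ‖y‖ ^ (-(a + 2 * ε))) := by
          apply lintegral_mono
          intro y
          calc _ ≤ hk N (t - s) (x - y) *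
                (ENNReal.ofReal (s ^ (ε - 1)) * ENNReal.ofReal ‖y‖ ^ (-(a + 2 * ε))) :=
                mul_le_mul' le_rfl (hpt y)
            _ = _ := by ring
      _ = ENNReal.ofReal (s ^ (ε - 1)) *
            ∫⁻ y, hk N (t - s) (x - y) * ENNReal.ofReal ‖y‖ ^ (-(a + 2 * ε)) := by
          rw [lintegral_const_mul' _ _ ENNReal.ofReal_ne_top]
      _ ≤ ENNReal.ofReal (s ^ (ε - 1)) *
            ENNReal.ofReal (A * pm N x (t - s) ^ (-(a + 2 * ε))) := by
          gcongr; exact hAb _ hts x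
      _ ≤ _ := by
          rw [← ENNReal.ofReal_mul (by positivity)]
          apply ENNReal.ofReal_le_ofReal
          have h1 : pm N x (t - s) ^ (-(a + 2 * ε))
              ≤ 2 ^ (a + 2 * ε) * (pm N x t ^ (-a) * t ^ (-ε)) := by
            calc _ ≤ (pm N x t / 2) ^ (-(a + 2 * ε)) :=
                  Real.rpow_le_rpow_of_nonpos (by positivity) hcase (by linarith)
              _ = 2 ^ (a + 2 * ε) * (pm N x t ^ (-a) * pm N x t ^ (2 * (-ε))) := by
                  rw [rpow_half_neg hpm, ← Real.rpow_add hpm]; congr 2; ring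
              _ ≤ _ := by
                  rw [← sqrt_rpow_two_mul ht]
                  have h3 : pm N x t ^ (2 * (-ε)) ≤ Real.sqrt t ^ (2 * (-ε)) :=
                    Real.rpow_le_rpow_of_nonpos (Real.sqrt_pos.2 ht) (le_max_right _ _)
                      (by linarith)
                  gcongr
          calc s ^ (ε - 1) * (A * pm N x (t - s) ^ (-(a + 2 * ε)))
              ≤ s ^ (ε - 1) * (A * (2 ^ (a + 2 * ε) * (pm N x t ^ (-a) * t ^ (-ε)))) := by
                gcongr
            _ = (A * 2 ^ (a + 2 * ε) + 0) * pm N x t ^ (-a) * t ^ (-ε) * s ^ (ε - 1) := by ring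
            _ ≤ _ := by
                gcongr
                positivity
  · push Not at hcase
    have hxt : ‖x‖ < Real.sqrt t := by
      by_contra hx
      push Not at hx
      have h1 : pm N x t = ‖x‖ := max_eq_left hx
      have h2 : ‖x‖ ≤ pm N x (t - s) := le_max_left _ _
      linarith
    have h1 : pm N x t = Real.sqrt t := max_eq_right hxt.le
    have hs2 : t / 2 ≤ s := by
      by_contra hx
      push Not at hx
      have h2 : Real.sqrt t / 2 ≤ Real.sqrt (t - s) := half_sqrt_le ht (by linarith)
      have h3 : Real.sqrt (t - s) ≤ pm N x (t - s) := le_max_right _ _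
      linarith
    have hsq := Real.sqrt_pos.2 ht
    calc ∫⁻ y, hk N (t - s) (x - y) * ENNReal.ofReal (pm N y s ^ (-(a + 2)))
        ≤ ∫⁻ y, hk N (t - s) (x - y) * ENNReal.ofReal ((Real.sqrt t / 2) ^ (-(a + 2))) := by
          apply lintegral_mono
          intro y
          refine mul_le_mul' le_rfl (ENNReal.ofReal_le_ofReal ?_)
          apply Real.rpow_le_rpow_of_nonpos (by positivity) _ (by linarith)
          exact (half_sqrt_le ht hs2).trans (le_max_right _ _)
      _ = ENNReal.ofReal ((Real.sqrt t / 2) ^ (-(a + 2))) := by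
          rw [lintegral_mul_const' _ _ ENNReal.ofReal_ne_top, hk_lintegral N hts, one_mul]
      _ ≤ _ := by
          apply ENNReal.ofReal_le_ofReal
          rw [rpow_half_neg hsq, h1]
          have h4 : Real.sqrt t ^ (-(a + 2)) = Real.sqrt t ^ (-a) * (t ^ (-ε) * t ^ (ε - 1)) := by
            rw [← Real.rpow_add ht, ← sqrt_rpow_two_mul ht, ← Real.rpow_add hsq]
            congr 1; ring
          have h5 : t ^ (ε - 1) ≤ s ^ (ε - 1) :=
            Real.rpow_le_rpow_of_nonpos hs hst.le (by linarith)
          calc 2 ^ (a + 2) * Real.sqrt t ^ (-(a + 2))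
              ≤ 2 ^ (a + 2) * (Real.sqrt t ^ (-a) * (t ^ (-ε) * s ^ (ε - 1))) := by
                rw [h4]; gcongr
            _ = (0 + 2 ^ (a + 2)) * Real.sqrt t ^ (-a) * t ^ (-ε) * s ^ (ε - 1) := by ring
            _ ≤ _ := by gcongr; positivity

lemma lemC (N : ℕ) (hN : 1 ≤ N) (a : ℝ) (ha0 : 0 < a) (ha : a < N) :
    ∃ B : ℝ, 0 < B ∧ ∀ t : ℝ, 0 < t → ∀ x : Euc N,
      ∫⁻ s in Set.Ioo 0 t,
        ∫⁻ y, hk N (t - s) (x - y) * ENNReal.ofReal (pm N y s ^ (-(a + 2)))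
        ≤ ENNReal.ofReal (B * pm N x t ^ (-a)) := by
  obtain ⟨B, ε, hB, hε, h⟩ := lemB N hN a ha0 ha
  refine ⟨B / ε, by positivity, ?_⟩
  intro t ht x
  have hpm := pm_pos N x ht
  have hii : IntervalIntegrable (fun s : ℝ => s ^ (ε - 1)) volume 0 t :=
    intervalIntegral.intervalIntegrable_rpow' (by linarith)
  have hIntg : IntegrableOn (fun s : ℝ => B * pm N x t ^ (-a) * t ^ (-ε) * s ^ (ε - 1))
      (Set.Ioo 0 t) := by
    apply Integrable.const_mul
    exact (intervalIntegrable_iff_integrableOn_Ioo_of_le ht.le).1 hii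
  calc _ ≤ ∫⁻ s in Set.Ioo 0 t,
        ENNReal.ofReal (B * pm N x t ^ (-a) * t ^ (-ε) * s ^ (ε - 1)) := by
        apply setLIntegral_mono' measurableSet_Ioo
        intro s hs
        exact h s t hs.1 hs.2 x
    _ = ENNReal.ofReal (∫ s in Set.Ioo 0 t, B * pm N x t ^ (-a) * t ^ (-ε) * s ^ (ε - 1)) := by
        rw [ofReal_integral_eq_lintegral_ofReal hIntg]
        filter_upwards [ae_restrict_mem measurableSet_Ioo] with s hs
        have := hs.1
        positivity
    _ = _ := by
        congr 1
        rw [integral_const_mul, ← integral_Ioc_eq_integral_Ioo,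
          ← intervalIntegral.integral_of_le ht.le, integral_rpow (Or.inl (by linarith)),
          sub_add_cancel, Real.zero_rpow hε.ne', Real.rpow_neg ht.le]
        have : t ^ ε ≠ 0 := by positivity
        field_simp
        ring

/-- The Duhamel operator. -/
def duh (N : ℕ) (p : ℝ) (φ : Euc N → ℝ) (W : Euc N × ℝ → ℝ≥0∞) (z : Euc N × ℝ) : ℝ≥0∞ :=
  (∫⁻ y, hk N z.2 (z.1 - y) * ENNReal.ofReal (φ y)) +
    ∫⁻ s in Set.Ioo 0 z.2, ∫⁻ y, hk N (z.2 - s) (z.1 - y) * W (y, s) ^ p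

lemma measurable_hk (N : ℕ) : Measurable (fun w : ℝ × Euc N => hk N w.1 w.2) := by
  unfold hk
  fun_prop

lemma measurable_inner (N : ℕ) (p : ℝ) {W : Euc N × ℝ → ℝ≥0∞} (hW : Measurable W) :
    Measurable (fun w : (Euc N × ℝ) × ℝ =>
      ∫⁻ y, hk N (w.1.2 - w.2) (w.1.1 - y) * W (y, w.2) ^ p) := by
  apply Measurable.lintegral_prod_right'
    (f := fun v : ((Euc N × ℝ) × ℝ) × Euc N =>
      hk N (v.1.1.2 - v.1.2) (v.1.1.1 - v.2) * W (v.2, v.1.2) ^ p)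
  have h1 : Measurable (fun v : ((Euc N × ℝ) × ℝ) × Euc N =>
      hk N (v.1.1.2 - v.1.2) (v.1.1.1 - v.2)) :=
    (measurable_hk N).comp (g := fun w : ℝ × Euc N => hk N w.1 w.2)
      (f := fun v : ((Euc N × ℝ) × ℝ) × Euc N => (v.1.1.2 - v.1.2, v.1.1.1 - v.2)) (by fun_prop)
  have h2 : Measurable (fun v : ((Euc N × ℝ) × ℝ) × Euc N => W (v.2, v.1.2)) :=
    hW.comp (by fun_prop)
  exact h1.mul (h2.pow_const p)

lemma measurable_duh (N : ℕ) (p : ℝ) {φ : Euc N → ℝ} (hφ : Measurable φ)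
    {W : Euc N × ℝ → ℝ≥0∞} (hW : Measurable W) : Measurable (duh N p φ W) := by
  unfold duh
  apply Measurable.add
  · apply Measurable.lintegral_prod_right'
      (f := fun v : (Euc N × ℝ) × Euc N => hk N v.1.2 (v.1.1 - v.2) * ENNReal.ofReal (φ v.2))
    have h1 : Measurable (fun v : (Euc N × ℝ) × Euc N => hk N v.1.2 (v.1.1 - v.2)) :=
      (measurable_hk N).comp (g := fun w : ℝ × Euc N => hk N w.1 w.2)
        (f := fun v : (Euc N × ℝ) × Euc N => (v.1.2, v.1.1 - v.2)) (by fun_prop)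
    exact h1.mul (by fun_prop)
  · have h := (measurable_inner N p hW)
    have hset : MeasurableSet {w : (Euc N × ℝ) × ℝ | 0 < w.2 ∧ w.2 < w.1.2} :=
      (measurableSet_lt measurable_const measurable_snd).inter
        (measurableSet_lt measurable_snd (by fun_prop))
    have h2 := (h.indicator hset).lintegral_prod_right' (ν := (volume : Measure ℝ))
    convert h2 using 2 with z
    rw [← lintegral_indicator measurableSet_Ioo]
    rfl

lemma duh_mono (N : ℕ) {p : ℝ} (hp : 0 ≤ p) (φ : Euc N → ℝ) {W W' : Euc N × ℝ → ℝ≥0∞}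
    (h : W ≤ W') : duh N p φ W ≤ duh N p φ W' := by
  intro z
  unfold duh
  gcongr with s y
  exact h _

lemma duh_iSup (N : ℕ) {p : ℝ} (hp : 0 < p) (φ : Euc N → ℝ) {W : ℕ → Euc N × ℝ → ℝ≥0∞}
    (hW : ∀ n, Measurable (W n)) (hm : Monotone W) (z : Euc N × ℝ) :
    duh N p φ (fun w => ⨆ n, W n w) z = ⨆ n, duh N p φ (W n) z := by
  unfold duh
  have hpow : ∀ w, (⨆ n, W n w) ^ p = ⨆ n, W n w ^ p := fun w =>
    (ENNReal.orderIsoRpow p hp).map_iSup (fun n => W n w)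
  rw [← ENNReal.add_iSup]
  congr 1
  rw [← lintegral_iSup]
  · apply lintegral_congr
    intro s
    rw [← lintegral_iSup]
    · simp_rw [hpow, ENNReal.mul_iSup]
    · intro n
      have h1 : Measurable (fun y : Euc N => hk N (z.2 - s) (z.1 - y)) :=
        (measurable_hk N).comp (g := fun w : ℝ × Euc N => hk N w.1 w.2)
          (f := fun y : Euc N => (z.2 - s, z.1 - y)) (by fun_prop)
      have h2 : Measurable (fun y : Euc N => W n (y, s)) := (hW n).comp (by fun_prop)
      exact h1.mul (h2.pow_const p)
    · intro n m hnm y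
      dsimp only
      gcongr
      exact hm hnm _
  · intro n
    exact (measurable_inner N p (hW n)).comp (f := fun s : ℝ => (z, s)) (by fun_prop)
  · intro n m hnm s
    dsimp only
    gcongr with y
    exact hm hnm _

/-- The iteration. -/
def iter (N : ℕ) (p q : ℝ) (u₀ v₀ : Euc N → ℝ) :
    ℕ → (Euc N × ℝ → ℝ≥0∞) × (Euc N × ℝ → ℝ≥0∞)
  | 0 => (fun _ => 0, fun _ => 0)
  | n + 1 => (duh N p u₀ (iter N p q u₀ v₀ n).2, duh N q v₀ (iter N p q u₀ v₀ n).1)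

lemma iter_meas (N : ℕ) (p q : ℝ) {u₀ v₀ : Euc N → ℝ} (hu : Measurable u₀) (hv : Measurable v₀)
    (n : ℕ) : Measurable (iter N p q u₀ v₀ n).1 ∧ Measurable (iter N p q u₀ v₀ n).2 := by
  induction n with
  | zero => exact ⟨measurable_const, measurable_const⟩
  | succ n ih => exact ⟨measurable_duh N p hu ih.2, measurable_duh N q hv ih.1⟩

lemma iter_mono (N : ℕ) {p q : ℝ} (hp : 0 ≤ p) (hq : 0 ≤ q) (u₀ v₀ : Euc N → ℝ) :
    Monotone (iter N p q u₀ v₀) := by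
  apply monotone_nat_of_le_succ
  intro n
  induction n with
  | zero => exact ⟨fun _ => zero_le, fun _ => zero_le⟩
  | succ n ih => exact ⟨duh_mono N hp u₀ ih.2, duh_mono N hq v₀ ih.1⟩

/-- One step of the estimate. -/
lemma duh_bound (N : ℕ) {p a b A B d M' M : ℝ} (hp : 0 ≤ p) (hd : 0 < d) (hA : 0 < A)
    (hB : 0 < B) (hM' : 0 < M')
    (hpb : p * b = a + 2)
    (hAb : ∀ t : ℝ, 0 < t → ∀ x : Euc N,
      ∫⁻ y, hk N t (x - y) * ENNReal.ofReal ‖y‖ ^ (-a) ≤ ENNReal.ofReal (A * pm N x t ^ (-a)))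
    (hBb : ∀ t : ℝ, 0 < t → ∀ x : Euc N,
      ∫⁻ s in Set.Ioo 0 t,
        ∫⁻ y, hk N (t - s) (x - y) * ENNReal.ofReal (pm N y s ^ (-(a + 2)))
        ≤ ENNReal.ofReal (B * pm N x t ^ (-a)))
    (hM : d * A + M' ^ p * B ≤ M)
    {u₀ : Euc N → ℝ}
    (hu : ∀ x : Euc N, ENNReal.ofReal (u₀ x) ≤ ENNReal.ofReal d * ENNReal.ofReal ‖x‖ ^ (-a))
    {W : Euc N × ℝ → ℝ≥0∞}
    (hW : ∀ x : Euc N, ∀ t : ℝ, 0 < t → W (x, t) ≤ ENNReal.ofReal (M' * pm N x t ^ (-b)))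
    (x : Euc N) (t : ℝ) (ht : 0 < t) :
    duh N p u₀ W (x, t) ≤ ENNReal.ofReal (M * pm N x t ^ (-a)) := by
  have hpm := pm_pos N x ht
  have h1 : ∫⁻ y, hk N t (x - y) * ENNReal.ofReal (u₀ y)
      ≤ ENNReal.ofReal (d * (A * pm N x t ^ (-a))) := by
    calc _ ≤ ∫⁻ y, ENNReal.ofReal d * (hk N t (x - y) * ENNReal.ofReal ‖y‖ ^ (-a)) := by
          apply lintegral_mono
          intro y
          calc _ ≤ hk N t (x - y) * (ENNReal.ofReal d * ENNReal.ofReal ‖y‖ ^ (-a)) :=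
                mul_le_mul' le_rfl (hu y)
            _ = _ := by ring
      _ = ENNReal.ofReal d * ∫⁻ y, (hk N t (x - y) * ENNReal.ofReal ‖y‖ ^ (-a)) := by
          rw [lintegral_const_mul' _ _ ENNReal.ofReal_ne_top]
      _ ≤ _ := by
          rw [ENNReal.ofReal_mul hd.le]
          exact mul_le_mul' le_rfl (hAb t ht x)
  have h2 : ∫⁻ s in Set.Ioo 0 t, ∫⁻ y, hk N (t - s) (x - y) * W (y, s) ^ p
      ≤ ENNReal.ofReal (M' ^ p * (B * pm N x t ^ (-a))) := by
    calc _ ≤ ∫⁻ s in Set.Ioo 0 t, ENNReal.ofReal (M' ^ p) *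
          ∫⁻ y, hk N (t - s) (x - y) * ENNReal.ofReal (pm N y s ^ (-(a + 2))) := by
          apply setLIntegral_mono' measurableSet_Ioo
          intro s hs
          rw [← lintegral_const_mul' _ _ ENNReal.ofReal_ne_top]
          apply lintegral_mono
          intro y
          have hpy := pm_pos N y hs.1
          calc _ ≤ hk N (t - s) (x - y) *
                (ENNReal.ofReal (M' ^ p) * ENNReal.ofReal (pm N y s ^ (-(a + 2)))) := by
                refine mul_le_mul' le_rfl ?_
                refine (ENNReal.rpow_le_rpow (hW y s hs.1) hp).trans ?_
                rw [ENNReal.ofReal_rpow_of_pos (by positivity),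
                  ← ENNReal.ofReal_mul (by positivity)]
                apply ENNReal.ofReal_le_ofReal
                rw [Real.mul_rpow hM'.le (by positivity), ← Real.rpow_mul hpy.le,
                  show -b * p = -(a + 2) by linarith]
            _ = _ := by ring
      _ = ENNReal.ofReal (M' ^ p) * ∫⁻ s in Set.Ioo 0 t,
          ∫⁻ y, hk N (t - s) (x - y) * ENNReal.ofReal (pm N y s ^ (-(a + 2))) := by
          rw [lintegral_const_mul' _ _ ENNReal.ofReal_ne_top]
      _ ≤ _ := by
          rw [ENNReal.ofReal_mul (by positivity)]
          exact mul_le_mul' le_rfl (hBb t ht x)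
  refine (add_le_add h1 h2).trans ?_
  rw [← ENNReal.ofReal_add (by positivity) (by positivity)]
  apply ENNReal.ofReal_le_ofReal
  calc _ = (d * A + M' ^ p * B) * pm N x t ^ (-a) := by ring
    _ ≤ _ := mul_le_mul_of_nonneg_right hM (by positivity)

lemma heatS_eq (N : ℕ) {t : ℝ} (ht : 0 ≤ t) (φ : Euc N → ℝ) (x : Euc N) :
    heatS N t φ x = ∫⁻ y, hk N t (x - y) * ENNReal.ofReal (φ y) := by
  unfold heatS hk
  apply lintegral_congr
  intro y
  rw [ENNReal.ofReal_mul (by positivity)]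

lemma duh_eq_heat (N : ℕ) {p : ℝ} (hp : 0 ≤ p) (φ : Euc N → ℝ) (W : Euc N × ℝ → ℝ≥0∞)
    (hW : ∀ x t, 0 < t → W (x, t) ≠ ⊤) (x : Euc N) (t : ℝ) (ht : 0 < t) :
    duh N p φ W (x, t) = heatS N t φ x +
      ∫⁻ s in Set.Ioo 0 t, heatS N (t - s) (fun y => (W (y, s)).toReal ^ p) x := by
  unfold duh
  rw [heatS_eq N ht.le]
  congr 1
  apply setLIntegral_congr_fun measurableSet_Ioo
  intro s hs
  dsimp only
  rw [heatS_eq N (by linarith [hs.2])]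
  apply lintegral_congr
  intro y
  rw [← ENNReal.ofReal_rpow_of_nonneg ENNReal.toReal_nonneg hp,
    ENNReal.ofReal_toReal (hW y s hs.1)]

lemma exists_consts {p q : ℝ} (hp : 0 ≤ p) (hpq : 1 < p * q) {B : ℝ} (hB : 0 < B) :
    ∃ M M' : ℝ, 0 < M ∧ 0 < M' ∧ M' ^ p * B ≤ M / 2 ∧ M ^ q * B ≤ M' / 2 := by
  set K : ℝ := 2 * (2 * B) ^ p * B with hK
  have hK0 : 0 < K := by positivity
  have he : 0 < p * q - 1 := by linarith
  set δ : ℝ := (1 / K) ^ (1 / (p * q - 1)) with hδ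
  have hδ0 : 0 < δ := by positivity
  refine ⟨δ, 2 * B * δ ^ q, hδ0, by positivity, ?_, ?_⟩
  · have h1 : δ ^ (p * q - 1) = 1 / K := by
      rw [hδ, ← Real.rpow_mul (by positivity), one_div_mul_cancel he.ne', Real.rpow_one]
    have h2 : δ ^ (q * p) = δ * (1 / K) := by
      rw [← h1, show q * p = 1 + (p * q - 1) by ring, Real.rpow_add hδ0, Real.rpow_one]
    rw [Real.mul_rpow (by positivity) (by positivity), ← Real.rpow_mul hδ0.le, h2]
    have : (2 * B) ^ p ≠ 0 := by positivity
    apply le_of_eq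
    rw [hK]
    field_simp
  · apply le_of_eq; ring

lemma pm_le (N : ℕ) (x : Euc N) {t a M C : ℝ} (ht : 0 < t) (ha : 0 ≤ a) (hM : 0 ≤ M)
    (hC : M * 2 ^ a ≤ C) :
    M * pm N x t ^ (-a) ≤ C * (‖x‖ + Real.sqrt t) ^ (-a) := by
  have hs := Real.sqrt_pos.2 ht
  have hpos : 0 < ‖x‖ + Real.sqrt t := by positivity
  have h1 : (‖x‖ + Real.sqrt t) / 2 ≤ pm N x t := by
    have h2 : ‖x‖ ≤ pm N x t := le_max_left _ _
    have h3 : Real.sqrt t ≤ pm N x t := le_max_right _ _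
    linarith
  calc M * pm N x t ^ (-a) ≤ M * ((‖x‖ + Real.sqrt t) / 2) ^ (-a) := by
        have := Real.rpow_le_rpow_of_nonpos (by positivity) h1 (show -a ≤ 0 by linarith)
        gcongr
    _ = (M * 2 ^ a) * (‖x‖ + Real.sqrt t) ^ (-a) := by
        rw [rpow_half_neg hpos]; ring
    _ ≤ _ := by gcongr

lemma locBdd_of (N : ℕ) {U : Euc N × ℝ → ℝ≥0∞} {M a : ℝ} (hM : 0 ≤ M) (ha : 0 ≤ a)
    (hU : ∀ x t, 0 < t → (U (x, t)).toReal ≤ M * pm N x t ^ (-a)) :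
    LocBdd N ⊤ (fun x t => (U (x, t)).toReal) := by
  intro τ hτ _
  refine ⟨M * Real.sqrt τ ^ (-a), fun t ht _ => Filter.Eventually.of_forall fun x => ?_⟩
  rw [abs_of_nonneg ENNReal.toReal_nonneg]
  refine (hU x t (hτ.trans_le ht)).trans ?_
  apply mul_le_mul_of_nonneg_left _ hM
  apply Real.rpow_le_rpow_of_nonpos (Real.sqrt_pos.2 hτ) _ (by linarith)
  exact (Real.sqrt_le_sqrt ht).trans (le_max_right _ _)

/-- Corollary 3.2 (ii), `Ω = ℝ^N`, `P = Q = 2`: there are `d*, C > 0` such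
that data with `0 ≤ u₀ ≤ d|x|^{-N/r₁}`, `0 ≤ v₀ ≤ d|x|^{-N/r₂}` and `0 < d ≤ d*` yield a
global-in-time solution of (S) with `u ≤ C(|x|+√t)^{-N/r₁}` and `v ≤ C(|x|+√t)^{-N/r₂}`. -/
theorem statement13 (N : ℕ) (hN : 1 ≤ N) (p q : ℝ) (hp : 0 ≤ p) (hq : 0 ≤ q)
    (hpq : 1 < p * q) (r₁ r₂ : ℝ)
    (hr₁def : r₁ = (N : ℝ) / 2 * ((p * q - 1) / (p + 1)))
    (hr₂def : r₂ = (N : ℝ) / 2 * ((p * q - 1) / (q + 1)))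
    (hr₁ : 1 < r₁) (hr₂ : 1 < r₂) :
    ∃ dstar C : ℝ, 0 < dstar ∧ 0 < C ∧
      ∀ d : ℝ, 0 < d → d ≤ dstar →
        ∀ u₀ v₀ : Euc N → ℝ, Measurable u₀ → Measurable v₀ →
          (∀ x, 0 ≤ u₀ x) → (∀ x, 0 ≤ v₀ x) →
          (∀ x : Euc N, ENNReal.ofReal (u₀ x) ≤
              ENNReal.ofReal d * ENNReal.ofReal ‖x‖ ^ (-(N : ℝ) / r₁)) →
          (∀ x : Euc N, ENNReal.ofReal (v₀ x) ≤
              ENNReal.ofReal d * ENNReal.ofReal ‖x‖ ^ (-(N : ℝ) / r₂)) →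
          ∃ u v : Euc N → ℝ → ℝ, IsSolSys N p q u₀ v₀ ⊤ u v ∧
            ∀ t : ℝ, 0 < t →
              ∀ᵐ x ∂(volume : Measure (Euc N)),
                u x t ≤ C * (‖x‖ + Real.sqrt t) ^ (-(N : ℝ) / r₁) ∧
                v x t ≤ C * (‖x‖ + Real.sqrt t) ^ (-(N : ℝ) / r₂) := by
  have hN0 : (0 : ℝ) < N := by exact_mod_cast hN
  have hp0 : 0 < p := by
    rcases hp.eq_or_lt with h | h
    · rw [← h] at hpq; linarith
    · exact h
  have hq0 : 0 < q := by
    rcases hq.eq_or_lt with h | h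
    · rw [← h] at hpq; linarith
    · exact h
  have hpq' : p * q - 1 ≠ 0 := by linarith
  obtain ⟨a, ha⟩ : ∃ a, a = (N : ℝ) / r₁ := ⟨_, rfl⟩
  obtain ⟨b, hb⟩ : ∃ b, b = (N : ℝ) / r₂ := ⟨_, rfl⟩
  have ha0 : 0 < a := by rw [ha]; positivity
  have hb0 : 0 < b := by rw [hb]; positivity
  have haN : a < N := by rw [ha]; exact div_lt_self hN0 hr₁
  have hbN : b < N := by rw [hb]; exact div_lt_self hN0 hr₂
  have ha2 : a = 2 * (p + 1) / (p * q - 1) := by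
    rw [ha, hr₁def]; field_simp
  have hb2 : b = 2 * (q + 1) / (p * q - 1) := by
    rw [hb, hr₂def]; field_simp
  have hpb : p * b = a + 2 := by
    rw [ha2, hb2]; field_simp; ring
  have hqa : q * a = b + 2 := by
    rw [eq_div_iff hpq'] at ha2 hb2
    apply mul_right_cancel₀ hpq'
    linear_combination q * ha2 - hb2
  rw [neg_div, neg_div, ← ha, ← hb]
  clear hr₁def hr₂def
  obtain ⟨A₁, hA₁, hA₁b⟩ := lemA N hN a ha0.le haN
  obtain ⟨A₂, hA₂, hA₂b⟩ := lemA N hN b hb0.le hbN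
  obtain ⟨B₁, hB₁, hB₁b⟩ := lemC N hN a ha0 haN
  obtain ⟨B₂, hB₂, hB₂b⟩ := lemC N hN b hb0 hbN
  obtain ⟨M, M', hM, hM', h1, h2⟩ := exists_consts hp hpq (B := B₁ + B₂) (by positivity)
  refine ⟨min (M / (2 * A₁)) (M' / (2 * A₂)), M * 2 ^ a + M' * 2 ^ b,
    lt_min (by positivity) (by positivity), by positivity, ?_⟩
  intro d hd hdd u₀ v₀ hum hvm hu0 hv0 hu hv
  have hd1 : d * A₁ ≤ M / 2 := by
    have := hdd.trans (min_le_left _ _)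
    rw [le_div_iff₀ (by positivity)] at this
    linarith
  have hd2 : d * A₂ ≤ M' / 2 := by
    have := hdd.trans (min_le_right _ _)
    rw [le_div_iff₀ (by positivity)] at this
    linarith
  have hc1 : d * A₁ + M' ^ p * B₁ ≤ M := by
    have : 0 ≤ M' ^ p * B₂ := by positivity
    linarith
  have hc2 : d * A₂ + M ^ q * B₂ ≤ M' := by
    have : 0 ≤ M ^ q * B₁ := by positivity
    linarith
  set I := iter N p q u₀ v₀ with hI
  have hbd : ∀ n, (∀ x : Euc N, ∀ t : ℝ, 0 < t →
        (I n).1 (x, t) ≤ ENNReal.ofReal (M * pm N x t ^ (-a))) ∧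
      (∀ x : Euc N, ∀ t : ℝ, 0 < t →
        (I n).2 (x, t) ≤ ENNReal.ofReal (M' * pm N x t ^ (-b))) := by
    intro n
    induction n with
    | zero => exact ⟨fun _ _ _ => zero_le, fun _ _ _ => zero_le⟩
    | succ n ih =>
      exact ⟨duh_bound N hp hd hA₁ hB₁ hM' hpb hA₁b hB₁b hc1 hu ih.2,
        duh_bound N hq hd hA₂ hB₂ hM hqa hA₂b hB₂b hc2 hv ih.1⟩
  have hmono := iter_mono N hp hq u₀ v₀
  have hmeas := iter_meas N p q hum hvm
  set U : Euc N × ℝ → ℝ≥0∞ := fun w => ⨆ n, (I n).1 w with hU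
  set V : Euc N × ℝ → ℝ≥0∞ := fun w => ⨆ n, (I n).2 w with hV
  have hUm : Measurable U := Measurable.iSup fun n => (hmeas n).1
  have hVm : Measurable V := Measurable.iSup fun n => (hmeas n).2
  have hUb : ∀ x t, 0 < t → U (x, t) ≤ ENNReal.ofReal (M * pm N x t ^ (-a)) :=
    fun x t ht => iSup_le fun n => (hbd n).1 x t ht
  have hVb : ∀ x t, 0 < t → V (x, t) ≤ ENNReal.ofReal (M' * pm N x t ^ (-b)) :=
    fun x t ht => iSup_le fun n => (hbd n).2 x t ht
  have hUt : ∀ x t, 0 < t → U (x, t) ≠ ⊤ :=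
    fun x t ht => ne_top_of_le_ne_top ENNReal.ofReal_ne_top (hUb x t ht)
  have hVt : ∀ x t, 0 < t → V (x, t) ≠ ⊤ :=
    fun x t ht => ne_top_of_le_ne_top ENNReal.ofReal_ne_top (hVb x t ht)
  have hUr : ∀ x t, 0 < t → (U (x, t)).toReal ≤ M * pm N x t ^ (-a) := fun x t ht => by
    have := pm_pos N x ht
    exact ENNReal.toReal_le_of_le_ofReal (by positivity) (hUb x t ht)
  have hVr : ∀ x t, 0 < t → (V (x, t)).toReal ≤ M' * pm N x t ^ (-b) := fun x t ht => by
    have := pm_pos N x ht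
    exact ENNReal.toReal_le_of_le_ofReal (by positivity) (hVb x t ht)
  have hUeq : ∀ z, U z = duh N p u₀ V z := by
    intro z
    rw [hV, duh_iSup N hp0 u₀ (fun n => (hmeas n).2) (fun n m h => (hmono h).2)]
    have h0 : Monotone fun n => (I n).1 z := fun n m h => (hmono h).1 z
    exact (h0.iSup_nat_add 1).symm
  have hVeq : ∀ z, V z = duh N q v₀ U z := by
    intro z
    rw [hU, duh_iSup N hq0 v₀ (fun n => (hmeas n).1) (fun n m h => (hmono h).1)]
    have h0 : Monotone fun n => (I n).2 z := fun n m h => (hmono h).2 z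
    exact (h0.iSup_nat_add 1).symm
  refine ⟨fun x t => (U (x, t)).toReal, fun x t => (V (x, t)).toReal, ⟨⟨?_, ?_, ?_, ?_, ?_, ?_⟩, ?_⟩, ?_⟩
  · exact fun _ _ => ENNReal.toReal_nonneg
  · exact fun _ _ => ENNReal.toReal_nonneg
  · exact hUm.ennreal_toReal
  · exact hVm.ennreal_toReal
  · exact locBdd_of N hM.le ha0.le hUr
  · exact locBdd_of N hM'.le hb0.le hVr
  · intro t ht _
    refine ⟨Filter.Eventually.of_forall fun x => ?_, Filter.Eventually.of_forall fun x => ?_⟩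
    · rw [ENNReal.ofReal_toReal (hUt x t ht), hUeq, duh_eq_heat N hp u₀ V hVt x t ht]
    · rw [ENNReal.ofReal_toReal (hVt x t ht), hVeq, duh_eq_heat N hq v₀ U hUt x t ht]
  · intro t ht
    refine Filter.Eventually.of_forall fun x => ⟨?_, ?_⟩
    · refine (hUr x t ht).trans (pm_le N x ht ha0.le hM.le ?_)
      have : 0 ≤ M' * 2 ^ b := by positivity
      linarith
    · refine (hVr x t ht).trans (pm_le N x ht hb0.le hM'.le ?_)
      have : 0 ≤ M * 2 ^ a := by positivity
      linarith
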